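/- Monotonicity of V* and U*/V*: for β₁ ∈ [0, 1] set A(β₁) = 9 − √3·√(3 + 4β₁ + 4β₁²) and B(β₁) = 4 − 2β₁ (so 3 ≤ A ≤ 6, 2 ≤ B ≤ 4, A − B > 0 and 3B − A > 0 on [0,1]). Then the function V*(β₁) = (4/3)·A²/((A − B)·(A + 3B)) is strictly decreasing on [0, 1], and the function (U*/V*)(β₁) = (3/8)·(A − B)²·(3·(1 + 2β₁) + (9 − A))/((1 − β₁)·(3B − A)) is strictly increasing on [0, 1). -/

import Mathlib

/-- `A(β₁) = 9 − √3·√(3 + 4β₁ + 4β₁²)`. -/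
noncomputable def Afun (b : ℝ) : ℝ := 9 - Real.sqrt 3 * Real.sqrt (3 + 4 * b + 4 * b ^ 2)

/-- `B(β₁) = 4 − 2β₁`. -/
def Bfun (b : ℝ) : ℝ := 4 - 2 * b

/-!
Both claims come from the strict concavity of `A`, which holds because the square root of a
quadratic polynomial with negative discriminant is strictly convex.

Since `A` and `B` both vanish at `2`, the ratio `r = A / B` is a multiple of the slope of a chord of
`A` ending at `2`, so it increases strictly. As `V* = (4/3) r² / ((r - 1) (r + 3))` and this
expression decreases in `r` for `1 < r ≤ 3`, `V*` decreases.

For `U*/V*`, the function `D = A - B` is concave, nonnegative and less than `2 D(1)` on `[-1, 1]`.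
If `x < y < 1` and `t = (1 - y) / (1 - x)`, then `D(y) ≥ t D(x) + (1 - t) D(1)`, so that
`D(y) > (1 + t) / 2 * D(x)`, and `((1 + t) / 2)² ≥ t` yields `D(y)² / (1 - y) > D(x)² / (1 - x)`.
The remaining factor increases because the Lipschitz constant `√12` of `A` is less than `6`.
-/

open Set

section SqrtQuadratic

variable {a b c : ℝ}

theorem quadratic_pos_of_discrim_neg (ha : 0 < a) (hd : discrim a b c < 0) (x : ℝ) :
    0 < a * x ^ 2 + b * x + c := by
  rw [discrim] at hd
  have completed_square : 4 * a * (a * x ^ 2 + b * x + c) =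
      (2 * a * x + b) ^ 2 + (4 * a * c - b ^ 2) := by ring
  refine pos_of_mul_pos_right (a := 4 * a) ?_ (by positivity)
  rw [completed_square]
  linarith [sq_nonneg (2 * a * x + b)]

/-- The strict Cauchy–Schwarz inequality for the positive definite binary form whose
dehomogenization is `a x² + b x + c`. -/
theorem polar_lt_sqrt_mul_sqrt (ha : 0 < a) (hd : discrim a b c < 0) {x y : ℝ} (hxy : x ≠ y) :
    a * x * y + b * (x + y) / 2 + c <
      √(a * x ^ 2 + b * x + c) * √(a * y ^ 2 + b * y + c) := by
  have hx := quadratic_pos_of_discrim_neg ha hd x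
  rw [← Real.sqrt_mul hx.le]
  apply Real.lt_sqrt_of_sq_lt
  have gram_det : (a * x ^ 2 + b * x + c) * (a * y ^ 2 + b * y + c) -
      (a * x * y + b * (x + y) / 2 + c) ^ 2 = -discrim a b c / 4 * (x - y) ^ 2 := by
    rw [discrim]; ring
  have : 0 < -discrim a b c / 4 * (x - y) ^ 2 :=
    mul_pos (by linarith) (sq_pos_of_ne_zero (sub_ne_zero.2 hxy))
  linarith

theorem strictConvexOn_sqrt_quadratic (ha : 0 < a) (hd : discrim a b c < 0) :
    StrictConvexOn ℝ univ fun x : ℝ => √(a * x ^ 2 + b * x + c) := by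
  refine ⟨convex_univ, fun x _ y _ hxy s t hs ht hst => ?_⟩
  have hqx := quadratic_pos_of_discrim_neg ha hd x
  have hqy := quadratic_pos_of_discrim_neg ha hd y
  have hpolar := mul_lt_mul_of_pos_left (polar_lt_sqrt_mul_sqrt ha hd hxy) (mul_pos hs ht)
  simp only [smul_eq_mul]
  rw [Real.sqrt_lt' (by positivity)]
  calc a * (s * x + t * y) ^ 2 + b * (s * x + t * y) + c
      = s ^ 2 * (a * x ^ 2 + b * x + c) + t ^ 2 * (a * y ^ 2 + b * y + c) +
          2 * (s * t * (a * x * y + b * (x + y) / 2 + c)) := by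
        obtain rfl : t = 1 - s := by linarith
        ring
    _ < s ^ 2 * (a * x ^ 2 + b * x + c) + t ^ 2 * (a * y ^ 2 + b * y + c) +
          2 * (s * t * (√(a * x ^ 2 + b * x + c) * √(a * y ^ 2 + b * y + c))) := by linarith
    _ = (s * √(a * x ^ 2 + b * x + c) + t * √(a * y ^ 2 + b * y + c)) ^ 2 := by
        rw [add_sq, mul_pow, mul_pow, Real.sq_sqrt hqx.le, Real.sq_sqrt hqy.le]
        ring

theorem abs_sqrt_quadratic_sub_lt (ha : 0 < a) (hd : discrim a b c < 0) {x y : ℝ} (hxy : x ≠ y) :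
    |√(a * x ^ 2 + b * x + c) - √(a * y ^ 2 + b * y + c)| < √a * |x - y| := by
  have hqx := quadratic_pos_of_discrim_neg ha hd x
  have hqy := quadratic_pos_of_discrim_neg ha hd y
  have hpolar := polar_lt_sqrt_mul_sqrt ha hd hxy
  refine lt_of_pow_lt_pow_left₀ 2 (by positivity) ?_
  rw [sq_abs, mul_pow, Real.sq_sqrt ha.le, sq_abs, sub_sq, Real.sq_sqrt hqx.le,
    Real.sq_sqrt hqy.le]
  linarith

end SqrtQuadratic

theorem strictMonoOn_sq_div_sub_of_concaveOn {𝕜 : Type*} [Field 𝕜] [LinearOrder 𝕜]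
    [IsStrictOrderedRing 𝕜] {s : Set 𝕜} {f : 𝕜 → 𝕜} {c : 𝕜} (hf : ConcaveOn 𝕜 s f) (hc : c ∈ s)
    (hf_nonneg : ∀ x ∈ s, x < c → 0 ≤ f x) (hf_lt : ∀ x ∈ s, x < c → f x < 2 * f c) :
    StrictMonoOn (fun x => f x ^ 2 / (c - x)) (s ∩ Iio c) := by
  rintro x ⟨hxs, hxc : x < c⟩ y ⟨-, hyc : y < c⟩ hxy
  have hcx : 0 < c - x := sub_pos.2 hxc
  have hcy : 0 < c - y := sub_pos.2 hyc
  have chord : (c - y) * f x + (y - x) * f c ≤ (c - x) * f y := by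
    have h := hf.2 hxs hc (div_nonneg hcy.le hcx.le) (div_nonneg (sub_pos.2 hxy).le hcx.le)
      (by field_simp; ring)
    have hy : ((c - y) / (c - x)) • x + ((y - x) / (c - x)) • c = y := by
      simp only [smul_eq_mul]; field_simp; ring
    rw [hy] at h
    simp only [smul_eq_mul] at h
    field_simp at h
    linarith
  have mean_lt : ((c - x) + (c - y)) * f x < 2 * ((c - x) * f y) := by
    have := mul_lt_mul_of_pos_left (hf_lt x hxs hxc) (sub_pos.2 hxy)
    linarith
  have mean_sq_lt : (((c - x) + (c - y)) * f x) ^ 2 < (2 * ((c - x) * f y)) ^ 2 :=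
    pow_lt_pow_left₀ mean_lt (mul_nonneg (by positivity) (hf_nonneg x hxs hxc)) two_ne_zero
  have am_gm : 4 * ((c - x) * (c - y)) * f x ^ 2 ≤ (((c - x) + (c - y)) * f x) ^ 2 := by
    rw [mul_pow]
    exact mul_le_mul_of_nonneg_right
      (by linarith [four_mul_le_sq_add (c - x) (c - y)]) (sq_nonneg _)
  beta_reduce
  rw [div_lt_div_iff₀ hcx hcy]
  refine lt_of_mul_lt_mul_left (a := 4 * (c - x)) ?_ (by positivity)
  linarith

theorem strictAntiOn_sq_div_sub_one_mul_add_three :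
    StrictAntiOn (fun r : ℝ => r ^ 2 / ((r - 1) * (r + 3))) (Ioc 1 3) := by
  rintro x ⟨hx, -⟩ y ⟨hy, hy'⟩ hxy
  have hx1 : 0 < x - 1 := sub_pos.2 hx
  have hy1 : 0 < y - 1 := sub_pos.2 hy
  beta_reduce
  rw [div_lt_div_iff₀ (mul_pos hy1 (by linarith)) (mul_pos hx1 (by linarith)), ← sub_pos]
  have cross_difference : x ^ 2 * ((y - 1) * (y + 3)) - y ^ 2 * ((x - 1) * (x + 3)) =
      (y - x) * (x * (3 - y) + y * (3 - x)) := by ring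
  rw [cross_difference]
  exact mul_pos (sub_pos.2 hxy)
    (add_pos_of_nonneg_of_pos (mul_nonneg (by linarith) (by linarith))
      (mul_pos (by linarith) (by linarith)))

theorem Afun_eq (b : ℝ) : Afun b = 9 - √(12 * b ^ 2 + 12 * b + 9) := by
  rw [Afun, ← Real.sqrt_mul (by norm_num)]
  ring_nf

theorem Afun_two : Afun 2 = 0 := by
  rw [Afun_eq, show (12 * 2 ^ 2 + 12 * 2 + 9 : ℝ) = 9 ^ 2 by norm_num, Real.sqrt_sq (by norm_num)]
  norm_num

theorem Afun_neg_one : Afun (-1) = 6 := by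
  rw [Afun_eq, show (12 * (-1) ^ 2 + 12 * (-1) + 9 : ℝ) = 3 ^ 2 by norm_num,
    Real.sqrt_sq (by norm_num)]
  norm_num

theorem Afun_le_six_sub_two_mul (b : ℝ) : Afun b ≤ 6 - 2 * b := by
  have : 3 + 2 * b ≤ √(12 * b ^ 2 + 12 * b + 9) :=
    Real.le_sqrt_of_sq_le (by nlinarith [sq_nonneg b])
  rw [Afun_eq]
  linarith

theorem three_lt_Afun {b : ℝ} (hb : b ∈ Icc 0 1) : 3 < Afun b := by
  have : √(12 * b ^ 2 + 12 * b + 9) < 6 := by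
    rw [Real.sqrt_lt' (by norm_num)]
    nlinarith [hb.1, hb.2]
  rw [Afun_eq]
  linarith

theorem strictConcaveOn_Afun : StrictConcaveOn ℝ univ Afun := by
  have h : StrictConvexOn ℝ univ fun b : ℝ => √(12 * b ^ 2 + 12 * b + 9) :=
    strictConvexOn_sqrt_quadratic (by norm_num) (by norm_num [discrim])
  refine (h.neg.add_const 9).congr fun b _ => ?_
  simp only [Pi.add_apply, Pi.neg_apply, Afun_eq]
  ring

theorem abs_Afun_sub_lt {x y : ℝ} (hxy : x ≠ y) : |Afun x - Afun y| < 6 * |x - y| := by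
  have h_sqrt : √(12 : ℝ) < 6 := by rw [Real.sqrt_lt' (by norm_num)]; norm_num
  calc |Afun x - Afun y|
      = |√(12 * x ^ 2 + 12 * x + 9) - √(12 * y ^ 2 + 12 * y + 9)| := by
        rw [Afun_eq, Afun_eq, sub_sub_sub_cancel_left, abs_sub_comm]
    _ < √12 * |x - y| := abs_sqrt_quadratic_sub_lt (by norm_num) (by norm_num [discrim]) hxy
    _ ≤ 6 * |x - y| := by gcongr

theorem strictAnti_three_mul_Bfun_sub_Afun : StrictAnti fun b => 3 * Bfun b - Afun b := by
  intro x y hxy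
  have h := (abs_lt.1 (abs_Afun_sub_lt hxy.ne)).2
  rw [abs_of_neg (sub_neg.2 hxy)] at h
  simp only [Bfun]
  linarith

theorem strictMono_three_mul_add_nine_sub_Afun :
    StrictMono fun b => 3 * (1 + 2 * b) + (9 - Afun b) := by
  intro x y hxy
  have h := (abs_lt.1 (abs_Afun_sub_lt hxy.ne)).1
  rw [abs_of_neg (sub_neg.2 hxy)] at h
  beta_reduce
  linarith

theorem Bfun_pos {b : ℝ} (hb : b < 2) : 0 < Bfun b := by
  rw [Bfun]
  linarith

theorem Bfun_lt_Afun {b : ℝ} (hb : b ∈ Ioo (-1) 2) : Bfun b < Afun b := by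
  have : √(12 * b ^ 2 + 12 * b + 9) < 5 + 2 * b := by
    rw [Real.sqrt_lt' (by linarith [hb.1])]
    nlinarith [mul_pos (neg_lt_iff_pos_add.1 hb.1) (sub_pos.2 hb.2)]
  rw [Afun_eq, Bfun]
  linarith

theorem Afun_lt_three_mul_Bfun {b : ℝ} (hb : b < 2) : Afun b < 3 * Bfun b := by
  have := strictAnti_three_mul_Bfun_sub_Afun hb
  simp only [Afun_two, Bfun] at this ⊢
  linarith

theorem strictMonoOn_Afun_div_Bfun : StrictMonoOn (fun b => Afun b / Bfun b) (Iio 2) := by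
  have div_eq_secant (b : ℝ) : Afun b / Bfun b = -((Afun b - Afun 2) / (b - 2)) / 2 := by
    rw [Afun_two, sub_zero, ← div_neg, neg_sub, div_div, Bfun]
    ring_nf
  intro x hx y hy hxy
  have secant_lt := strictConcaveOn_Afun.secant_strict_mono (mem_univ 2) (mem_univ x) (mem_univ y)
    (ne_of_lt hx) (ne_of_lt hy) hxy
  simp only [div_eq_secant]
  linarith

/-- The quantity `V* = (4/3)A²/((A − B)(A + 3B))` as a function of `β₁`. -/
noncomputable def Vstar (b : ℝ) : ℝ :=
  (4 / 3) * (Afun b) ^ 2 / ((Afun b - Bfun b) * (Afun b + 3 * Bfun b))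

/-- The ratio `U*/V*` as a function of `β₁`; at the pole `β₁ = 1` it takes the junk value `0`. -/
noncomputable def UoverVstar (b : ℝ) : ℝ :=
  (3 / 8) * (Afun b - Bfun b) ^ 2 * (3 * (1 + 2 * b) + (9 - Afun b)) /
    ((1 - b) * (3 * Bfun b - Afun b))

theorem strictAntiOn_Vstar : StrictAntiOn Vstar (Ioo (-1) 2) := by
  have ratio_mapsTo : MapsTo (fun b => Afun b / Bfun b) (Ioo (-1) 2) (Ioc 1 3) := fun b hb =>
    ⟨(one_lt_div (Bfun_pos hb.2)).2 (Bfun_lt_Afun hb),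
      (div_le_iff₀ (Bfun_pos hb.2)).2 (Afun_lt_three_mul_Bfun hb.2).le⟩
  have Vstar_eq {b : ℝ} (hb : b ∈ Ioo (-1) 2) : Vstar b =
      4 / 3 * ((Afun b / Bfun b) ^ 2 / ((Afun b / Bfun b - 1) * (Afun b / Bfun b + 3))) := by
    have hB := (Bfun_pos hb.2).ne'
    rw [Vstar, div_sub_one hB, div_add' _ _ _ hB, div_pow, div_mul_div_comm (Afun b - Bfun b),
      ← sq, div_div_div_cancel_right₀ (pow_ne_zero 2 hB), mul_div_assoc]
  intro x hx y hy hxy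
  rw [Vstar_eq hx, Vstar_eq hy]
  gcongr 4 / 3 * ?_
  exact strictAntiOn_sq_div_sub_one_mul_add_three (ratio_mapsTo hx) (ratio_mapsTo hy)
    (strictMonoOn_Afun_div_Bfun hx.2 hy.2 hxy)

theorem strictMonoOn_sq_Afun_sub_Bfun_div_one_sub :
    StrictMonoOn (fun b => (Afun b - Bfun b) ^ 2 / (1 - b)) (Ico (-1) 1) := by
  have convexOn_Bfun : ConvexOn ℝ univ Bfun :=
    ⟨convex_univ, fun x _ y _ s t _ _ hst => by
      simp only [Bfun, smul_eq_mul]; linear_combination -4 * hst⟩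
  have concaveOn_sub : ConcaveOn ℝ (Icc (-1) 1) (Afun - Bfun) :=
    (strictConcaveOn_Afun.concaveOn.sub convexOn_Bfun).subset (subset_univ _) (convex_Icc _ _)
  refine (strictMonoOn_sq_div_sub_of_concaveOn concaveOn_sub (by norm_num) ?_ ?_).mono
    fun b hb => ⟨Ico_subset_Icc_self hb, hb.2⟩
  · rintro b ⟨hb, -⟩ hb1
    obtain rfl | hb := hb.eq_or_lt
    · norm_num [Afun_neg_one, Bfun]
    · exact (sub_pos.2 (Bfun_lt_Afun ⟨hb, by linarith⟩)).le
  · intro b _ _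
    have h1 := three_lt_Afun (right_mem_Icc.2 zero_le_one)
    have hb := Afun_le_six_sub_two_mul b
    simp only [Pi.sub_apply, Bfun]
    linarith

theorem strictMonoOn_UoverVstar : StrictMonoOn UoverVstar (Ico (-1) 1) := by
  have UoverVstar_eq (b : ℝ) : UoverVstar b = 3 / 8 * ((Afun b - Bfun b) ^ 2 / (1 - b) *
      ((3 * (1 + 2 * b) + (9 - Afun b)) / (3 * Bfun b - Afun b))) := by
    rw [UoverVstar, div_mul_div_comm, mul_assoc, mul_div_assoc]
  have numerator_nonneg {b : ℝ} (hb : -1 ≤ b) : 0 ≤ 3 * (1 + 2 * b) + (9 - Afun b) := by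
    have := strictMono_three_mul_add_nine_sub_Afun.monotone hb
    simp only [Afun_neg_one] at this
    linarith
  have denominator_pos {b : ℝ} (hb : b < 1) : 0 < 3 * Bfun b - Afun b :=
    sub_pos.2 (Afun_lt_three_mul_Bfun (by linarith))
  intro x hx y hy hxy
  rw [UoverVstar_eq, UoverVstar_eq]
  gcongr 3 / 8 * ?_
  exact mul_lt_mul'' (strictMonoOn_sq_Afun_sub_Bfun_div_one_sub hx hy hxy)
    (div_lt_div₀ (strictMono_three_mul_add_nine_sub_Afun hxy)
      (strictAnti_three_mul_Bfun_sub_Afun hxy).le (numerator_nonneg hy.1) (denominator_pos hy.2))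
    (div_nonneg (sq_nonneg _) (sub_pos.2 hx.2).le)
    (div_nonneg (numerator_nonneg hx.1) (denominator_pos hx.2).le)

theorem Vstar_decreasing_UoverVstar_increasing_general :
    (∀ b ∈ Icc (0 : ℝ) 1, 3 ≤ Afun b ∧ Afun b ≤ 6 ∧ 2 ≤ Bfun b ∧ Bfun b ≤ 4) ∧
      (∀ b ∈ Ioo (-1 : ℝ) 2, 0 < Afun b - Bfun b ∧ 0 < 3 * Bfun b - Afun b) ∧
      StrictAntiOn Vstar (Ioo (-1) 2) ∧ StrictMonoOn UoverVstar (Ico (-1) 1) := by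
  refine ⟨fun b hb => ⟨(three_lt_Afun hb).le, ?_, ?_, ?_⟩,
    fun b hb => ⟨sub_pos.2 (Bfun_lt_Afun hb), sub_pos.2 (Afun_lt_three_mul_Bfun hb.2)⟩,
    strictAntiOn_Vstar, strictMonoOn_UoverVstar⟩
  · linarith [Afun_le_six_sub_two_mul b, hb.1]
  all_goals rw [Bfun]; linarith [hb.1, hb.2]

/-- on `[0,1]` one has `3 ≤ A ≤ 6`, `2 ≤ B ≤ 4`, `A − B > 0`,
`3B − A > 0`; the function `V* = (4/3)A²/((A − B)(A + 3B))` is strictly decreasing on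
`[0, 1]`, and `U*/V* = (3/8)(A − B)²(3(1 + 2β₁) + (9 − A))/((1 − β₁)(3B − A))` is
strictly increasing on `[0, 1)`. -/
theorem Vstar_decreasing_UoverVstar_increasing :
    (∀ b ∈ Set.Icc (0 : ℝ) 1,
        3 ≤ Afun b ∧ Afun b ≤ 6 ∧ 2 ≤ Bfun b ∧ Bfun b ≤ 4 ∧
          0 < Afun b - Bfun b ∧ 0 < 3 * Bfun b - Afun b) ∧
      StrictAntiOn
        (fun b : ℝ => (4 / 3) * (Afun b) ^ 2 / ((Afun b - Bfun b) * (Afun b + 3 * Bfun b)))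
        (Set.Icc 0 1) ∧
      StrictMonoOn
        (fun b : ℝ => (3 / 8) * (Afun b - Bfun b) ^ 2 * (3 * (1 + 2 * b) + (9 - Afun b)) /
          ((1 - b) * (3 * Bfun b - Afun b)))
        (Set.Ico 0 1) := by
  obtain ⟨bounds, pos, anti, mono⟩ := Vstar_decreasing_UoverVstar_increasing_general
  have Icc_subset : Icc (0 : ℝ) 1 ⊆ Ioo (-1) 2 := Icc_subset_Ioo (by norm_num) (by norm_num)
  refine ⟨fun b hb => ?_, anti.mono Icc_subset, mono.mono (Ico_subset_Ico_left (by norm_num))⟩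
  obtain ⟨hA, hA', hB, hB'⟩ := bounds b hb
  exact ⟨hA, hA', hB, hB', pos b (Icc_subset hb)⟩
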